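/- Let A be a complex algebra equipped with a linear functional φ : A → ℂ, and let A₁, A₂ ⊆ A be two subalgebras which are Boolean independent with respect to φ (i.e. φ(a₁⋯aₙ) = φ(a₁)⋯φ(aₙ) for every alternating sequence of elements of A₁ ∪ A₂). Then T₀(A₁) and T₀(A₂) are cyclically Boolean independent subalgebras of the augmentation ideal of T(A) with respect to (φ, [φ]). -/

import Mathlib

open scoped BigOperators

namespace NCProb

variable {A : Type*} [Ring A] [Algebra ℂ A]

/-- Ordered sublist of the tuple `a` on the indices satisfying `P`. -/
noncomputable def ordList {n : ℕ} (a : Fin n → A) (P : Fin n → Prop) [DecidablePred P] :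
    List A :=
  ((List.finRange n).filter fun i => decide (P i)).map a

/-- `(a, j)` is an alternating sequence for the pair of sets `(S₁, S₂)`:
`a i ∈ S₁` when `j i = false`, `a i ∈ S₂` when `j i = true`, and consecutive labels differ. -/
def Alternates {n : ℕ} (S₁ S₂ : Set A) (a : Fin n → A) (j : Fin n → Bool) : Prop :=
  (∀ i, a i ∈ (if j i then S₂ else S₁)) ∧
    ∀ (i : ℕ) (h : i + 1 < n), j ⟨i, Nat.lt_of_succ_lt h⟩ ≠ j ⟨i + 1, h⟩

def IsTracial (ω : A →ₗ[ℂ] ℂ) : Prop := ∀ a b : A, ω (a * b) = ω (b * a)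

/-- Freeness of a pair of subalgebras (given as sets) with respect to `Ψ`. -/
def IsFree (Ψ : A →ₗ[ℂ] ℂ) (S₁ S₂ : Set A) : Prop :=
  ∀ (n : ℕ) (a : Fin n → A) (j : Fin n → Bool),
    Alternates S₁ S₂ a j → (∀ i, Ψ (a i) = 0) → Ψ (List.ofFn a).prod = 0

/-- Conditional freeness with respect to the pair `(Ψ, φ)`. -/
def IsCondFree (Ψ φ : A →ₗ[ℂ] ℂ) (S₁ S₂ : Set A) : Prop :=
  ∀ (n : ℕ) (a : Fin n → A) (j : Fin n → Bool),
    Alternates S₁ S₂ a j → (∀ i, Ψ (a i) = 0) →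
      Ψ (List.ofFn a).prod = 0 ∧ φ (List.ofFn a).prod = ∏ i, φ (a i)

/-- Cyclic freeness with respect to the pair `(Ψ, ω)`. -/
def IsCyclicallyFree (Ψ ω : A →ₗ[ℂ] ℂ) (S₁ S₂ : Set A) : Prop :=
  IsFree Ψ S₁ S₂ ∧
    ∀ (n : ℕ) (a : Fin n → A) (j : Fin n → Bool) (hn : 2 ≤ n),
      Alternates S₁ S₂ a j →
      j ⟨0, by omega⟩ ≠ j ⟨n - 1, by omega⟩ →
      (∀ i, Ψ (a i) = 0) → ω (List.ofFn a).prod = 0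

/-- Infinitesimal freeness with respect to the pair `(Ψ, ω)`. -/
def IsInfFree (Ψ ω : A →ₗ[ℂ] ℂ) (S₁ S₂ : Set A) : Prop :=
  ∀ (n : ℕ) (a : Fin n → A) (j : Fin n → Bool),
    Alternates S₁ S₂ a j → (∀ i, Ψ (a i) = 0) →
      Ψ (List.ofFn a).prod = 0 ∧
      ω (List.ofFn a).prod = ∑ i : Fin n, ω (a i) * Ψ (ordList a fun k => k ≠ i).prod

/-- Cyclic-conditional freeness with respect to the triple `(Ψ, φ, ω)`. -/
def IsCycCondFree (Ψ φ ω : A →ₗ[ℂ] ℂ) (S₁ S₂ : Set A) : Prop :=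
  IsCondFree Ψ φ S₁ S₂ ∧
    ∀ (n : ℕ) (a : Fin n → A) (j : Fin n → Bool) (hn : 2 ≤ n),
      Alternates S₁ S₂ a j →
      j ⟨0, by omega⟩ ≠ j ⟨n - 1, by omega⟩ →
      (∀ i, Ψ (a i) = 0) → ω (List.ofFn a).prod = ∏ i, φ (a i)

/-- Boolean cumulants (with explicit fuel), via the standard recursion
`φ(a₁⋯aₙ) = Σ_{k=1}^{n} β_k(a₁,…,a_k)·φ(a_{k+1}⋯aₙ)`. -/
noncomputable def booleanAux (φ : A →ₗ[ℂ] ℂ) : ℕ → List A → ℂ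
  | 0, _ => 0
  | fuel + 1, l =>
      φ l.prod - ∑ k ∈ Finset.range (l.length - 1),
        booleanAux φ fuel (l.take (k + 1)) * φ (l.drop (k + 1)).prod

/-- The Boolean cumulant `β^φ(a₁,…,aₙ)` of the entries of the list `l = [a₁,…,aₙ]`. -/
noncomputable def booleanCumulant (φ : A →ₗ[ℂ] ℂ) (l : List A) : ℂ :=
  booleanAux φ l.length l

/-- Product of the `Ψ`-moments of the gaps between consecutive elements of `V`. -/
noncomputable def gapFactor {n : ℕ} (Ψ : A →ₗ[ℂ] ℂ) (a : Fin n → A) (V : Finset (Fin n)) : ℂ :=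
  (((V.sort (· ≤ ·)).zip (V.sort (· ≤ ·)).tail).map fun p =>
      Ψ (ordList a fun i => p.1 < i ∧ i < p.2).prod).prod

noncomputable def headProd {n : ℕ} (a : Fin n → A) (V : Finset (Fin n)) : A :=
  (ordList a fun i => ∀ v ∈ V, i < v).prod

noncomputable def tailProd {n : ℕ} (a : Fin n → A) (V : Finset (Fin n)) : A :=
  (ordList a fun i => ∀ v ∈ V, v < i).prod

/-- Cumulants with respect to `(Ψ, θ)` with explicit fuel, defined through the
moment-cumulant recursion obtained by singling out the distinguished block `V`:
mode 0: free cumulants (`θ = Ψ`, the block `V` contains the first letter);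
mode 1: infinitesimal free cumulants (wrap gap read in linear order `head·tail`);
mode 2: cyclic free cumulants (wrap gap read in cyclic order `tail·head`). -/
noncomputable def cumulAux (Ψ θ : A →ₗ[ℂ] ℂ) (mode : ℕ) : ℕ → List A → ℂ
  | 0, _ => 0
  | fuel + 1, l =>
      θ l.prod - ∑ V : Finset (Fin l.length),
        if V.Nonempty ∧ V ≠ Finset.univ ∧ (mode ≠ 0 ∨ ∃ v ∈ V, (v : ℕ) = 0) then
          cumulAux Ψ θ mode fuel ((V.sort (· ≤ ·)).map l.get) *
            Ψ (if mode = 2 then tailProd l.get V * headProd l.get V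
               else headProd l.get V * tailProd l.get V) *
            gapFactor Ψ l.get V
        else 0

/-- The free cumulant `κ^Ψ_n(a₁,…,aₙ)`. -/
noncomputable def freeCumulant (Ψ : A →ₗ[ℂ] ℂ) (l : List A) : ℂ :=
  cumulAux Ψ Ψ 0 l.length l

/-- The infinitesimal free cumulant `∂κ^Ψ_n(a₁,…,aₙ)` of the pair `(Ψ, dΨ)`. -/
noncomputable def infCumulant (Ψ dΨ : A →ₗ[ℂ] ℂ) (l : List A) : ℂ :=
  cumulAux Ψ dΨ 1 l.length l

/-- The cyclic free cumulant `Dκ^Ψ_n(a₁,…,aₙ)` of the pair `(Ψ, dΨ)`. -/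
noncomputable def cycCumulant (Ψ dΨ : A →ₗ[ℂ] ℂ) (l : List A) : ℂ :=
  cumulAux Ψ dΨ 2 l.length l

/-- Vanishing of mixed cumulants: `f` vanishes on mixed tuples from `S₁ ∪ S₂`. -/
def MixedVanishes (f : List A → ℂ) (S₁ S₂ : Set A) : Prop :=
  ∀ (n : ℕ) (a : Fin n → A), 2 ≤ n → (∀ i, a i ∈ S₁ ∪ S₂) →
    (∃ k, a k ∈ S₁) → (∃ l, a l ∈ S₂) → f (List.ofFn a) = 0

/-- The value `[φ](a₁ ⊗ ⋯ ⊗ aₙ) = Σ_{1≤i₁<…<i_ℓ≤n} ∏_k β^φ`(cyclic pieces)`. -/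
noncomputable def mkValue (φ : A →ₗ[ℂ] ℂ) {n : ℕ} (a : Fin n → A) : ℂ :=
  ∑ V : Finset (Fin n),
    if V.Nonempty then
      (((V.sort (· ≤ ·)).zip (V.sort (· ≤ ·)).tail).map fun p =>
          booleanCumulant φ (ordList a fun i => p.1 ≤ i ∧ i < p.2)).prod *
        booleanCumulant φ
          ((ordList a fun i => ∀ v ∈ V, v ≤ i) ++ ordList a fun i => ∀ v ∈ V, i < v)
    else 0

/-- Non-crossing partitions of `{1,…,n}` encoded as finsets of blocks. -/
def IsNCPartition {n : ℕ} (P : Finset (Finset (Fin n))) : Prop :=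
  (∀ B ∈ P, B.Nonempty) ∧
    (∀ i : Fin n, ∃! B, B ∈ P ∧ i ∈ B) ∧
    ∀ B₁ ∈ P, ∀ B₂ ∈ P, ∀ p ∈ B₁, ∀ r ∈ B₁, ∀ q ∈ B₂, ∀ s ∈ B₂,
      p < q → q < r → r < s → B₁ = B₂

open scoped Classical in
/-- The value `⌞Ψ⌟(a₁⊗⋯⊗aₙ) = Σ_{π ∈ NC(n)} (n+1-|π|)·κ^Ψ_π(a₁,…,aₙ)`. -/
noncomputable def lsoulValue (Ψ : A →ₗ[ℂ] ℂ) {n : ℕ} (a : Fin n → A) : ℂ :=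
  ∑ P : Finset (Finset (Fin n)),
    if IsNCPartition P then
      ((n : ℂ) + 1 - P.card) * ∏ B ∈ P, freeCumulant Ψ ((B.sort (· ≤ ·)).map a)
    else 0

/-- `F` extends the linear functional `f` from `A` to the tensor algebra `T(A)`:
`F(a₁ ⊗ ⋯ ⊗ aₙ) = f(a₁⋯aₙ)`. -/
def ExtendsTo (f : A →ₗ[ℂ] ℂ) (F : TensorAlgebra ℂ A →ₗ[ℂ] ℂ) : Prop :=
  ∀ l : List A, l ≠ [] → F (l.map fun x => TensorAlgebra.ι ℂ x).prod = f l.prod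


/-- Boolean independence of two (non-unital) subalgebras, given as sets. -/
def IsBooleanIndep {A : Type*} [Ring A] [Algebra ℂ A]
    (φ : A →ₗ[ℂ] ℂ) (S₁ S₂ : Set A) : Prop :=
  ∀ (n : ℕ) (a : Fin n → A) (j : Fin n → Bool),
    Alternates S₁ S₂ a j → φ (List.ofFn a).prod = ∏ i, φ (a i)

/-- Cyclic Boolean independence with respect to the pair `(φ, ω)`. -/
def IsCycBooleanIndep {A : Type*} [Ring A] [Algebra ℂ A]
    (φ ω : A →ₗ[ℂ] ℂ) (S₁ S₂ : Set A) : Prop :=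
  IsBooleanIndep φ S₁ S₂ ∧
    ∀ (n : ℕ) (a : Fin n → A) (j : Fin n → Bool) (hn : 2 ≤ n),
      Alternates S₁ S₂ a j →
      j ⟨0, by omega⟩ ≠ j ⟨n - 1, by omega⟩ →
      ω (List.ofFn a).prod = φ (List.ofFn a).prod

section BooleanCumulants

/-- The Boolean cumulants do not depend on the fuel once it bounds the length. -/
lemma booleanAux_eq_booleanCumulant (φ : A →ₗ[ℂ] ℂ) (fuel : ℕ) (l : List A) (hl : l ≠ [])
    (hfuel : l.length ≤ fuel) : booleanAux φ fuel l = booleanCumulant φ l := by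
  induction fuel using Nat.strong_induction_on generalizing l with
  | _ fuel ih =>
    obtain ⟨m, hm⟩ : ∃ m, l.length = m + 1 :=
      Nat.exists_eq_succ_of_ne_zero (by simpa using hl)
    obtain ⟨f, rfl⟩ : ∃ f, fuel = f + 1 := Nat.exists_eq_succ_of_ne_zero (by omega)
    rcases hfuel.eq_or_lt with h | h
    · rw [booleanCumulant, h]
    · rw [booleanCumulant, hm, booleanAux, booleanAux]
      congr 1
      refine Finset.sum_congr rfl fun k hk => ?_
      have hk' : k < m := by simpa [hm] using hk
      have hne : l.take (k + 1) ≠ [] := by simpa using hl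
      rw [ih f (by omega) _ hne (by simp; omega), ih m (by omega) _ hne (by simp; omega)]

/-- The moment-cumulant recursion for Boolean cumulants. -/
lemma map_prod_eq_sum_booleanCumulant (φ : A →ₗ[ℂ] ℂ) (hφ : φ 1 = 1) (l : List A)
    (hl : l ≠ []) :
    φ l.prod = ∑ k ∈ Finset.range l.length,
      booleanCumulant φ (l.take (k + 1)) * φ (l.drop (k + 1)).prod := by
  obtain ⟨m, hm⟩ : ∃ m, l.length = m + 1 :=
    Nat.exists_eq_succ_of_ne_zero (by simpa using hl)
  rw [hm, Finset.sum_range_succ, ← hm, List.take_length, List.drop_length, List.prod_nil, hφ,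
    mul_one]
  conv_rhs => rw [booleanCumulant, hm, booleanAux]
  rw [hm, Nat.add_sub_cancel]
  have : ∑ k ∈ Finset.range m, booleanAux φ m (l.take (k + 1)) * φ (l.drop (k + 1)).prod =
      ∑ k ∈ Finset.range m, booleanCumulant φ (l.take (k + 1)) * φ (l.drop (k + 1)).prod := by
    refine Finset.sum_congr rfl fun k hk => ?_
    rw [Finset.mem_range] at hk
    rw [booleanAux_eq_booleanCumulant φ m _ (by simpa using hl) (by simp; omega)]
  rw [this]
  ring

/-- If moments factorize at the splitting point for all words obtained by shortening `u` from the
left and `v` from the right, then the Boolean cumulant of `u ++ v` vanishes. -/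
lemma booleanCumulant_append_eq_zero (φ : A →ₗ[ℂ] ℂ) (hφ : φ 1 = 1) (u v : List A)
    (hu : u ≠ []) (hv : v ≠ [])
    (hfac : ∀ i < u.length, ∀ k, 0 < k → φ (u.drop i ++ v.take k).prod =
      φ (u.drop i).prod * φ (v.take k).prod) :
    booleanCumulant φ (u ++ v) = 0 := by
  induction hn : v.length using Nat.strong_induction_on generalizing v with
  | _ n ih =>
    obtain ⟨m, rfl⟩ : ∃ m, n = m + 1 :=
      Nat.exists_eq_succ_of_ne_zero (by rw [← hn]; simpa using hv)
    have hu0 : 0 < u.length := List.length_pos_iff.2 hu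
    have hfull : ∀ i < u.length, φ (u.drop i ++ v).prod = φ (u.drop i).prod * φ v.prod := by
      intro i hi
      have := hfac i hi v.length (by omega)
      rwa [List.take_length] at this
    have hrec := map_prod_eq_sum_booleanCumulant φ hφ (u ++ v) (by simp [hu])
    rw [List.length_append, Finset.sum_range_add, hn, Finset.sum_range_succ] at hrec
    have hleft : ∑ k ∈ Finset.range u.length, booleanCumulant φ ((u ++ v).take (k + 1)) *
        φ ((u ++ v).drop (k + 1)).prod = φ u.prod * φ v.prod := by
      rw [map_prod_eq_sum_booleanCumulant φ hφ u hu, Finset.sum_mul]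
      refine Finset.sum_congr rfl fun k hk => ?_
      rw [Finset.mem_range] at hk
      rw [List.take_append_of_le_length (by omega), List.drop_append_of_le_length (by omega),
        mul_assoc]
      congr 1
      rcases (Nat.succ_le_of_lt hk).eq_or_lt with h | h
      · rw [List.drop_of_length_le (by omega)]
        simp [hφ]
      · exact hfull _ h
    have hmid : ∑ k ∈ Finset.range m, booleanCumulant φ ((u ++ v).take (u.length + k + 1)) *
        φ ((u ++ v).drop (u.length + k + 1)).prod = 0 := by
      refine Finset.sum_eq_zero fun k hk => ?_
      rw [Finset.mem_range] at hk
      rw [add_assoc, List.take_length_add_append,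
        ih (k + 1) (by omega) (v.take (k + 1)) (by simpa using hv) _ (by simp; omega), zero_mul]
      intro i hi r hr
      rw [List.take_take]
      exact hfac i hi _ (by omega)
    have hlast : (u ++ v).take (u.length + m + 1) = u ++ v :=
      List.take_of_length_le (by simp; omega)
    have hlast' : (u ++ v).drop (u.length + m + 1) = [] :=
      List.drop_of_length_le (by simp; omega)
    have h0 := hfull 0 hu0
    rw [List.drop_zero] at h0
    rw [hleft, hmid, hlast, hlast', List.prod_nil, hφ, h0] at hrec
    simpa using hrec

end BooleanCumulants

section IntervalPartitions

lemma ordList_succ {α : Type*} {n : ℕ} (a : Fin (n + 1) → α) (P : Fin (n + 1) → Prop)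
    [DecidablePred P] :
    ordList a P = (if P 0 then [a 0] else []) ++
      ordList (fun i => a i.succ) (fun i => P i.succ) := by
  simp only [ordList, List.finRange_succ, List.filter_cons, List.filter_map]
  split_ifs with h <;> simp_all [Function.comp_def]

lemma ordList_congr {α : Type*} {n : ℕ} (a : Fin n → α) (P Q : Fin n → Prop) [DecidablePred P]
    [DecidablePred Q] (h : ∀ i, P i ↔ Q i) : ordList a P = ordList a Q := by
  simp [ordList, h]

lemma sort_map_succ {n : ℕ} (V : Finset (Fin n)) :
    (V.map (Fin.succEmb n)).sort (· ≤ ·) = (V.sort (· ≤ ·)).map Fin.succ :=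
  (Finset.map_sort _ _ _ _ (by simp)).symm

lemma sort_insert_zero_map_succ {n : ℕ} (V : Finset (Fin n)) :
    (insert 0 (V.map (Fin.succEmb n))).sort (· ≤ ·) = 0 :: (V.sort (· ≤ ·)).map Fin.succ := by
  rw [← sort_map_succ, Finset.sort_insert] <;> simp

lemma sum_finset_fin_succ {n : ℕ} (f : Finset (Fin (n + 1)) → ℂ) :
    ∑ V, f V = ∑ V : Finset (Fin n), f (V.map (Fin.succEmb n)) +
      ∑ V : Finset (Fin n), f (insert 0 (V.map (Fin.succEmb n))) := by
  have hpow : (Finset.univ.map (Fin.succEmb n)).powerset =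
      Finset.univ.map (Finset.mapEmbedding (Fin.succEmb n)).toEmbedding := by
    ext V
    simp [Finset.subset_map_iff, eq_comm]
  have huniv : (Finset.univ : Finset (Fin (n + 1))) =
      insert 0 (Finset.univ.map (Fin.succEmb n)) := by
    rw [Fin.univ_succ, Finset.cons_eq_insert]
    rfl
  rw [← Finset.powerset_univ, huniv, Finset.sum_powerset_insert (by simp), hpow,
    Finset.sum_map, Finset.sum_map]
  rfl

/-- The product of the Boolean cumulants of the blocks cut out by the positions in `V`, where the
letters `pre` are put in front of the letters preceding all positions in `V`. -/
noncomputable def intervalWeight (φ : A →ₗ[ℂ] ℂ) {n : ℕ} (pre : List A) (a : Fin n → A)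
    (V : Finset (Fin n)) : ℂ :=
  booleanCumulant φ (pre ++ ordList a fun i => ∀ v ∈ V, i < v) *
    if V.Nonempty then
      (((V.sort (· ≤ ·)).zip (V.sort (· ≤ ·)).tail).map fun p =>
          booleanCumulant φ (ordList a fun i => p.1 ≤ i ∧ i < p.2)).prod *
        booleanCumulant φ (ordList a fun i => ∀ v ∈ V, v ≤ i)
    else 1

/-- The blocks between consecutive positions do not change under prepending a letter. -/
lemma prod_zip_map_succ (φ : A →ₗ[ℂ] ℂ) {n : ℕ} (a : Fin (n + 1) → A) (s t : List (Fin n)) :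
    (((s.map Fin.succ).zip (t.map Fin.succ)).map fun p =>
        booleanCumulant φ (ordList a fun i => p.1 ≤ i ∧ i < p.2)).prod =
      ((s.zip t).map fun p =>
        booleanCumulant φ (ordList (fun i => a i.succ) fun i => p.1 ≤ i ∧ i < p.2)).prod := by
  rw [List.zip_map, List.map_map]
  congr 2
  funext p
  simp [ordList_succ]

lemma intervalWeight_map_succ (φ : A →ₗ[ℂ] ℂ) {n : ℕ} (pre : List A) (a : Fin (n + 1) → A)
    (V : Finset (Fin n)) :
    intervalWeight φ pre a (V.map (Fin.succEmb n)) =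
      intervalWeight φ (pre ++ [a 0]) (fun i => a i.succ) V := by
  unfold intervalWeight
  rw [sort_map_succ, ← List.map_tail, prod_zip_map_succ]
  rcases V.eq_empty_or_nonempty with rfl | hV
  · simp [ordList_succ]
  · have h0 : ¬ ∀ v, v ∉ V := fun h => hV.elim h
    simp [ordList_succ, h0]

lemma prod_blocks_insert_zero_map_succ (φ : A →ₗ[ℂ] ℂ) {n : ℕ} (a : Fin (n + 1) → A)
    (V : Finset (Fin n)) (W : Finset (Fin (n + 1))) (hW : W = insert 0 (V.map (Fin.succEmb n))) :
    (((W.sort (· ≤ ·)).zip (W.sort (· ≤ ·)).tail).map fun p =>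
          booleanCumulant φ (ordList a fun i => p.1 ≤ i ∧ i < p.2)).prod *
        booleanCumulant φ (ordList a fun i => ∀ v ∈ W, v ≤ i) =
      intervalWeight φ [a 0] (fun i => a i.succ) V := by
  subst hW
  unfold intervalWeight
  rw [sort_insert_zero_map_succ]
  rcases V.eq_empty_or_nonempty with rfl | hV
  · simp [ordList_succ]
  · obtain ⟨y, t, hyt⟩ : ∃ y t, V.sort (· ≤ ·) = y :: t :=
      List.exists_cons_of_ne_nil fun h => hV.ne_empty (by simpa using congrArg List.toFinset h)
    have hmem : ∀ v, v ∈ V ↔ v = y ∨ v ∈ t := fun v => by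
      rw [← Finset.mem_sort (· ≤ ·), hyt, List.mem_cons]
    have hsorted : ∀ v ∈ t, y ≤ v := by
      have := V.pairwise_sort (· ≤ ·)
      rw [hyt, List.pairwise_cons] at this
      exact this.1
    have hmin : ∀ i, (∀ v ∈ V, i < v) ↔ i < y := fun i =>
      ⟨fun h => h y ((hmem y).2 (Or.inl rfl)), fun h v hv => by
        rcases (hmem v).1 hv with rfl | hv
        · exact h
        · exact h.trans_le (hsorted v hv)⟩
    have hy : ¬ ∀ v, v ∉ V := fun h => hV.elim h
    have hzip := prod_zip_map_succ φ a (y :: t) t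
    rw [if_pos hV, hyt, List.tail_cons, List.tail_cons, ← hzip, ordList_congr _ _ _ hmin]
    simp only [List.map_cons, List.zip_cons_cons, List.prod_cons, mul_assoc]
    congr 1
    · simp [ordList_succ]
    · simp [ordList_succ, hy]

lemma ordList_lt_eq_nil {α : Type*} {n : ℕ} (a : Fin (n + 1) → α) (V : Finset (Fin (n + 1)))
    (hV : 0 ∈ V) : (ordList a fun i => ∀ v ∈ V, i < v) = [] := by
  simpa [ordList] using fun i => ⟨0, hV, Fin.zero_le i⟩

lemma intervalWeight_insert_zero_map_succ (φ : A →ₗ[ℂ] ℂ) {n : ℕ} (pre : List A)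
    (a : Fin (n + 1) → A) (V : Finset (Fin n)) :
    intervalWeight φ pre a (insert 0 (V.map (Fin.succEmb n))) =
      booleanCumulant φ pre * intervalWeight φ [a 0] (fun i => a i.succ) V := by
  rw [← prod_blocks_insert_zero_map_succ φ a V _ rfl, intervalWeight,
    ordList_lt_eq_nil _ _ (Finset.mem_insert_self _ _), List.append_nil,
    if_pos (Finset.insert_nonempty _ _)]

/-- Summing over all interval partitions resolves the moment-cumulant recursion. -/
lemma sum_intervalWeight (φ : A →ₗ[ℂ] ℂ) (hφ : φ 1 = 1) {n : ℕ} (pre : List A) (a : Fin n → A) :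
    ∑ V, intervalWeight φ pre a V = ∑ k ∈ Finset.range (n + 1),
      booleanCumulant φ (pre ++ (List.ofFn a).take k) * φ ((List.ofFn a).drop k).prod := by
  induction n generalizing pre with
  | zero => simp [intervalWeight, ordList, hφ, Finset.eq_empty_of_isEmpty]
  | succ n ih =>
    rw [sum_finset_fin_succ, Finset.sum_range_succ']
    simp_rw [intervalWeight_map_succ, intervalWeight_insert_zero_map_succ]
    rw [← Finset.mul_sum, ih, ih]
    congr 1
    · simp
    · rw [map_prod_eq_sum_booleanCumulant φ hφ _ (by simp)]
      simp

lemma sum_intervalWeight_singleton (φ : A →ₗ[ℂ] ℂ) (hφ : φ 1 = 1) {n : ℕ}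
    (a : Fin (n + 1) → A) :
    ∑ V, intervalWeight φ [a 0] (fun i => a i.succ) V = φ (List.ofFn a).prod := by
  rw [sum_intervalWeight φ hφ, map_prod_eq_sum_booleanCumulant φ hφ _ (by simp)]
  simp

/-- If the block wrapping around contributes nothing, only the interval partitions remain. -/
lemma mkValue_eq_map_prod (φ : A →ₗ[ℂ] ℂ) (hφ : φ 1 = 1) {n : ℕ} (a : Fin (n + 1) → A)
    (hwrap : ∀ V : Finset (Fin (n + 1)), 0 ∉ V → booleanCumulant φ
      ((ordList a fun i => ∀ v ∈ V, v ≤ i) ++ ordList a fun i => ∀ v ∈ V, i < v) = 0) :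
    mkValue φ a = φ (List.ofFn a).prod := by
  rw [mkValue, sum_finset_fin_succ, Finset.sum_eq_zero, zero_add,
    ← sum_intervalWeight_singleton φ hφ]
  · refine Finset.sum_congr rfl fun V _ => ?_
    rw [if_pos (Finset.insert_nonempty _ _), ordList_lt_eq_nil _ _ (Finset.mem_insert_self _ _),
      List.append_nil, prod_blocks_insert_zero_map_succ φ a V _ rfl]
  · intro V _
    rw [hwrap _ (by simp), mul_zero, ite_self]

end IntervalPartitions

section LabelledWords

variable {B : Bool → NonUnitalSubalgebra ℂ A}

/-- Multiplying neighbours with equal labels turns a labelled word into an alternating one. -/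
lemma exists_isChain_prod_eq (L : List (Bool × A)) (hL : ∀ p ∈ L, p.2 ∈ B p.1) :
    ∃ M : List (Bool × A), (∀ p ∈ M, p.2 ∈ B p.1) ∧ M.IsChain (fun p q => p.1 ≠ q.1) ∧
      (M.map Prod.snd).prod = (L.map Prod.snd).prod ∧
      M.head?.map Prod.fst = L.head?.map Prod.fst ∧
      M.getLast?.map Prod.fst = L.getLast?.map Prod.fst := by
  induction L with
  | nil => exact ⟨[], by simp⟩
  | cons p L ih =>
    obtain ⟨M, hM, hchain, hprod, hhead, hlast⟩ := ih fun q hq => hL q (List.mem_cons_of_mem _ hq)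
    have hp := hL p List.mem_cons_self
    rcases M with _ | ⟨q, M⟩
    · have : L = [] := by simpa [eq_comm] using hhead
      subst this
      exact ⟨[p], by simpa using hp, by simp⟩
    · rcases L with _ | ⟨r, L⟩
      · simp at hhead
      have hq := hM q List.mem_cons_self
      rw [List.map_cons, List.prod_cons] at hprod
      by_cases h : p.1 = q.1
      · refine ⟨(q.1, p.2 * q.2) :: M, ?_, ?_, ?_, ?_, ?_⟩
        · intro s hs
          rcases List.mem_cons.1 hs with rfl | hs
          · exact mul_mem (h ▸ hp) hq
          · exact hM s (List.mem_cons_of_mem _ hs)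
        · rw [List.isChain_cons] at hchain ⊢
          exact hchain
        · rw [List.map_cons, List.prod_cons, List.map_cons, List.prod_cons, ← hprod, mul_assoc]
        · simp [h]
        · rw [List.getLast?_cons_cons, ← hlast]
          rcases M with _ | ⟨s, M⟩ <;> simp
      · refine ⟨p :: q :: M, ?_, ?_, ?_, rfl, ?_⟩
        · intro s hs
          rcases List.mem_cons.1 hs with rfl | hs
          · exact hp
          · exact hM s hs
        · exact List.isChain_cons_cons.2 ⟨h, hchain⟩
        · simp only [List.map_cons, List.prod_cons] at hprod ⊢
          rw [hprod]
        · rw [List.getLast?_cons_cons, List.getLast?_cons_cons, hlast]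

/-- Moments factorize at every change of label. -/
lemma map_prod_append_of_label_ne (φ : A →ₗ[ℂ] ℂ)
    (hφ : ∀ L : List (Bool × A), (∀ p ∈ L, p.2 ∈ B p.1) → L.IsChain (fun p q => p.1 ≠ q.1) →
      φ (L.map Prod.snd).prod = (L.map fun p => φ p.2).prod)
    (u v : List (Bool × A)) (hu : ∀ p ∈ u, p.2 ∈ B p.1) (hv : ∀ p ∈ v, p.2 ∈ B p.1)
    (huv : ∀ p ∈ u.getLast?, ∀ q ∈ v.head?, p.1 ≠ q.1) :
    φ (u.map Prod.snd ++ v.map Prod.snd).prod =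
      φ (u.map Prod.snd).prod * φ (v.map Prod.snd).prod := by
  obtain ⟨M, hM, hMc, hMp, -, hMl⟩ := exists_isChain_prod_eq u hu
  obtain ⟨N, hN, hNc, hNp, hNh, -⟩ := exists_isChain_prod_eq v hv
  have hMN : ∀ p ∈ M.getLast?, ∀ q ∈ N.head?, p.1 ≠ q.1 := by
    intro p hp q hq
    rw [Option.mem_def] at hp hq
    rw [hp, Option.map_some, eq_comm, Option.map_eq_some_iff] at hMl
    rw [hq, Option.map_some, eq_comm, Option.map_eq_some_iff] at hNh
    obtain ⟨p', hp', h₁⟩ := hMl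
    obtain ⟨q', hq', h₂⟩ := hNh
    rw [← h₁, ← h₂]
    exact huv p' hp' q' hq'
  have h := hφ (M ++ N) (fun p hp => (List.mem_append.1 hp).elim (hM p) (hN p))
    (List.isChain_append.2 ⟨hMc, hNc, hMN⟩)
  rw [List.map_append, List.map_append, List.prod_append, List.prod_append, ← hφ M hM hMc,
    ← hφ N hN hNc, hMp, hNp] at h
  rw [List.prod_append, h]

/-- Boolean cumulants vanish on words with a change of label. -/
lemma booleanCumulant_append_of_label_ne (φ : A →ₗ[ℂ] ℂ)
    (hφ : ∀ L : List (Bool × A), (∀ p ∈ L, p.2 ∈ B p.1) → L.IsChain (fun p q => p.1 ≠ q.1) →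
      φ (L.map Prod.snd).prod = (L.map fun p => φ p.2).prod)
    (u v : List (Bool × A)) (hu : ∀ p ∈ u, p.2 ∈ B p.1) (hv : ∀ p ∈ v, p.2 ∈ B p.1)
    (p q : Bool × A) (hp : u.getLast? = some p) (hq : v.head? = some q) (hpq : p.1 ≠ q.1) :
    booleanCumulant φ (u.map Prod.snd ++ v.map Prod.snd) = 0 := by
  refine booleanCumulant_append_eq_zero φ (by simpa using hφ [] (by simp) (by simp)) _ _
    (by rintro h; simp_all) (by rintro h; simp_all) fun i hi k hk => ?_
  rw [List.length_map] at hi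
  rw [← List.map_drop, ← List.map_take]
  refine map_prod_append_of_label_ne φ hφ _ _ (fun r hr => hu r (List.mem_of_mem_drop hr))
    (fun r hr => hv r (List.mem_of_mem_take hr)) fun r hr s hs => ?_
  rw [List.getLast?_drop, if_neg (by omega), hp, Option.mem_some] at hr
  rw [List.head?_take, if_neg (by omega), hq, Option.mem_some] at hs
  rwa [← hr, ← hs]

lemma ordList_castSucc {α : Type*} {n : ℕ} (a : Fin (n + 1) → α) (P : Fin (n + 1) → Prop)
    [DecidablePred P] :
    ordList a P = ordList (fun i => a i.castSucc) (fun i => P i.castSucc) ++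
      if P (Fin.last n) then [a (Fin.last n)] else [] := by
  simp only [ordList, List.finRange_succ_last, List.filter_append, List.filter_map]
  split_ifs with h <;> simp_all [Function.comp_def]

lemma mkValue_eq_map_prod_of_label_ne (φ : A →ₗ[ℂ] ℂ)
    (hφ : ∀ L : List (Bool × A), (∀ p ∈ L, p.2 ∈ B p.1) → L.IsChain (fun p q => p.1 ≠ q.1) →
      φ (L.map Prod.snd).prod = (L.map fun p => φ p.2).prod)
    {n : ℕ} (hn : 0 < n) (a : Fin n → A) (j : Fin n → Bool) (ha : ∀ i, a i ∈ B (j i))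
    (hj : j ⟨0, hn⟩ ≠ j ⟨n - 1, by omega⟩) :
    mkValue φ a = φ (List.ofFn a).prod := by
  obtain ⟨m, rfl⟩ := Nat.exists_eq_succ_of_ne_zero hn.ne'
  refine mkValue_eq_map_prod φ (by simpa using hφ [] (by simp) (by simp)) a fun V hV => ?_
  have hmap : ∀ (P : Fin (m + 1) → Prop) [DecidablePred P],
      ordList a P = (ordList (fun i => (j i, a i)) P).map Prod.snd := fun P _ => by
    simp [ordList, Function.comp_def]
  have hmem : ∀ (P : Fin (m + 1) → Prop) [DecidablePred P],
      ∀ p ∈ ordList (fun i => (j i, a i)) P, p.2 ∈ B p.1 := fun P _ p hp => by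
    obtain ⟨i, -, rfl⟩ := List.mem_map.1 hp
    exact ha i
  rw [hmap, hmap]
  refine booleanCumulant_append_of_label_ne φ hφ _ _ (hmem _) (hmem _)
    (j (Fin.last m), a (Fin.last m)) (j 0, a 0) ?_ ?_ fun h => hj h.symm
  · rw [ordList_castSucc, if_pos fun v _ => Fin.le_last v, List.getLast?_concat]
  · rw [ordList_succ, if_pos fun v hv => Fin.pos_iff_ne_zero.2 fun h => hV (h ▸ hv)]
    rfl

end LabelledWords

section TensorWords

/-- Boolean independence in terms of labelled lists. -/
lemma map_prod_eq_of_isBooleanIndep (φ : A →ₗ[ℂ] ℂ) (A₁ A₂ : NonUnitalSubalgebra ℂ A)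
    (hbool : IsBooleanIndep φ (A₁ : Set A) (A₂ : Set A)) (L : List (Bool × A))
    (hL : ∀ p ∈ L, p.2 ∈ if p.1 then A₂ else A₁) (hchain : L.IsChain (fun p q => p.1 ≠ q.1)) :
    φ (L.map Prod.snd).prod = (L.map fun p => φ p.2).prod := by
  have h := hbool L.length (fun i => (L.get i).2) (fun i => (L.get i).1)
    ⟨fun i => ?_, fun i hi => ?_⟩
  · rw [← List.prod_ofFn] at h
    rw [List.ofFn_eq_map, List.ofFn_eq_map] at h
    simpa [← List.map_map, ← Function.comp_def] using h
  · have := hL _ (L.get_mem i)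
    by_cases hb : (L.get i).1 = true
    · rwa [if_pos hb] at this ⊢
    · rwa [if_neg hb] at this ⊢
  · exact List.isChain_iff_getElem.1 hchain i hi

/-- The tensors `c₁ ⊗ ⋯ ⊗ cₙ` with `n ≥ 1` and all letters in `C`. -/
def wordSet (C : NonUnitalSubalgebra ℂ A) : Set (TensorAlgebra ℂ A) :=
  {t | ∃ l : List A, l ≠ [] ∧ (∀ c ∈ l, c ∈ C) ∧ (l.map fun x => TensorAlgebra.ι ℂ x).prod = t}

lemma mem_span_wordSet_of_mem_adjoin (C : NonUnitalSubalgebra ℂ A) (x : TensorAlgebra ℂ A)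
    (hx : x ∈ NonUnitalAlgebra.adjoin ℂ ((fun x => TensorAlgebra.ι ℂ x) '' (C : Set A))) :
    x ∈ Submodule.span ℂ (wordSet C) := by
  induction hx using NonUnitalAlgebra.adjoin_induction with
  | mem x hx =>
    obtain ⟨c, hc, rfl⟩ := hx
    exact Submodule.subset_span ⟨[c], by simp, by simpa using hc, by simp⟩
  | add x y _ _ hx hy => exact add_mem hx hy
  | zero => exact zero_mem _
  | smul r x _ hx => exact Submodule.smul_mem _ r hx
  | mul x y _ _ hx hy =>
    have h := Submodule.mul_mem_mul hx hy
    rw [Submodule.span_mul_span] at h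
    refine Submodule.span_mono ?_ h
    rintro _ ⟨_, ⟨l, hl, hlC, rfl⟩, _, ⟨l', -, hlC', rfl⟩, rfl⟩
    exact ⟨l ++ l', by simp [hl],
      fun c hc => (List.mem_append.1 hc).elim (hlC c) (hlC' c), by simp⟩

lemma multilinearMap_eq_zero_of_mem_span {E ι : Type*} [AddCommGroup E] [Module ℂ E] [Fintype ι]
    (f : MultilinearMap ℂ (fun _ : ι => E) ℂ) (S : ι → Set E)
    (hf : ∀ x, (∀ i, x i ∈ S i) → f x = 0) (x : ι → E)
    (hx : ∀ i, x i ∈ Submodule.span ℂ (S i)) : f x = 0 := by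
  classical
  suffices h : ∀ (s : Finset ι) (x : ι → E), (∀ i ∈ s, x i ∈ Submodule.span ℂ (S i)) →
      (∀ i ∉ s, x i ∈ S i) → f x = 0 from
    h Finset.univ x (fun i _ => hx i) (by simp)
  intro s
  induction s using Finset.induction_on with
  | empty => exact fun x _ hx => hf x fun i => hx i (by simp)
  | insert i s hi ih =>
    intro x hx hx'
    suffices h : ∀ y ∈ Submodule.span ℂ (S i), f (Function.update x i y) = 0 by
      simpa using h (x i) (hx i (by simp))
    intro y hy
    induction hy using Submodule.span_induction with
    | mem y hy =>
      refine ih _ (fun k hk => ?_) (fun k hk => ?_)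
      · rw [Function.update_of_ne (by rintro rfl; exact hi hk)]
        exact hx k (Finset.mem_insert_of_mem hk)
      · rcases eq_or_ne k i with rfl | hki
        · simpa using hy
        · rw [Function.update_of_ne hki]
          exact hx' k (by simp [hki, hk])
    | zero => exact f.map_update_zero x i
    | add y z _ _ hy hz => rw [f.map_update_add, hy, hz, add_zero]
    | smul c y _ hy => rw [f.map_update_smul, hy, smul_zero]

lemma list_prod_mem_of_ne_nil (C : NonUnitalSubalgebra ℂ A) (l : List A) (hl : l ≠ [])
    (hC : ∀ c ∈ l, c ∈ C) : l.prod ∈ C := by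
  induction l with
  | nil => exact absurd rfl hl
  | cons c l ih =>
    have hc := hC c List.mem_cons_self
    rcases eq_or_ne l [] with rfl | hne
    · simpa using hc
    · rw [List.prod_cons]
      exact mul_mem hc (ih hne fun d hd => hC d (List.mem_cons_of_mem _ hd))

lemma flatten_ofFn_ne_nil {α : Type*} {n : ℕ} (l : Fin n → List α) (hn : 0 < n)
    (hl : l ⟨0, hn⟩ ≠ []) : (List.ofFn l).flatten ≠ [] := by
  rw [Ne, List.flatten_eq_nil_iff]
  exact fun h => hl (h _ (by simp))

lemma prod_ofFn_prod_map {n : ℕ} (l : Fin n → List A) :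
    (List.ofFn fun i => ((l i).map fun x => TensorAlgebra.ι ℂ x).prod).prod =
      ((List.ofFn l).flatten.map fun x => TensorAlgebra.ι ℂ x).prod := by
  rw [List.map_flatten, List.prod_flatten, List.map_ofFn, List.map_ofFn]
  rfl

end TensorWords

/-- Boolean independence of `(A₁, A₂)` with respect to `φ` implies cyclic
Boolean independence of `T₀(A₁)` and `T₀(A₂)` with respect to `(φ, [φ])`. -/
theorem booleanIndep_implies_cycBooleanIndep_tensorAlgebra
    {A : Type*} [Ring A] [Algebra ℂ A]
    (φ : A →ₗ[ℂ] ℂ)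
    (A₁ A₂ : NonUnitalSubalgebra ℂ A)
    (hbool : IsBooleanIndep φ (A₁ : Set A) (A₂ : Set A))
    -- the canonical extension of `φ` to `T(A)` (unital, as required)
    (φT : TensorAlgebra ℂ A →ₗ[ℂ] ℂ) (hφT1 : φT 1 = 1) (hφT : ExtendsTo φ φT)
    -- the functional `[φ]` on `T(A)`
    (brφ : TensorAlgebra ℂ A →ₗ[ℂ] ℂ) (hbrφ1 : brφ 1 = 1)
    (hbrφ : ∀ l : List A, l ≠ [] →
      brφ (l.map fun x => TensorAlgebra.ι ℂ x).prod = mkValue φ l.get) :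
    IsCycBooleanIndep φT brφ
      (↑(NonUnitalAlgebra.adjoin ℂ ((fun x => TensorAlgebra.ι ℂ x) '' (A₁ : Set A))) :
        Set (TensorAlgebra ℂ A))
      (↑(NonUnitalAlgebra.adjoin ℂ ((fun x => TensorAlgebra.ι ℂ x) '' (A₂ : Set A))) :
        Set (TensorAlgebra ℂ A)) := by
  set B : Bool → NonUnitalSubalgebra ℂ A := fun b => if b then A₂ else A₁
  have hB_mem : ∀ (b : Bool) (x : A), x ∈ (if b then (A₂ : Set A) else A₁) ↔ x ∈ B b := by
    intro b x
    cases b <;> rfl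
  have hφ := map_prod_eq_of_isBooleanIndep φ A₁ A₂ hbool
  have hspan : ∀ (b : Bool) (x : TensorAlgebra ℂ A),
      x ∈ (if b then (↑(NonUnitalAlgebra.adjoin ℂ
          ((fun x => TensorAlgebra.ι ℂ x) '' (A₂ : Set A))) : Set (TensorAlgebra ℂ A))
        else ↑(NonUnitalAlgebra.adjoin ℂ ((fun x => TensorAlgebra.ι ℂ x) '' (A₁ : Set A)))) →
      x ∈ Submodule.span ℂ (wordSet (B b)) := by
    intro b x hx
    cases b
    · exact mem_span_wordSet_of_mem_adjoin A₁ x hx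
    · exact mem_span_wordSet_of_mem_adjoin A₂ x hx
  refine ⟨fun n a j ha => ?_, fun n a j hn ha hcyc => ?_⟩
  · let F : MultilinearMap ℂ (fun _ : Fin n => TensorAlgebra ℂ A) ℂ :=
      φT.compMultilinearMap (MultilinearMap.mkPiAlgebraFin ℂ n (TensorAlgebra ℂ A)) -
        (MultilinearMap.mkPiAlgebra ℂ (Fin n) ℂ).compLinearMap fun _ => φT
    have hF : F a = 0 := by
      refine multilinearMap_eq_zero_of_mem_span F (fun i => wordSet (B (j i))) ?_ a
        fun i => hspan _ _ (ha.1 i)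
      intro x hx
      choose l hl hlB hlx using hx
      obtain rfl : (fun i => ((l i).map fun x => TensorAlgebra.ι ℂ x).prod) = x := funext hlx
      have hx' : ∀ i, φT ((l i).map fun x => TensorAlgebra.ι ℂ x).prod = φ (l i).prod :=
        fun i => hφT _ (hl i)
      have halt : Alternates (A₁ : Set A) A₂ (fun i => (l i).prod) j :=
        ⟨fun i => (hB_mem _ _).2 (list_prod_mem_of_ne_nil _ _ (hl i) (hlB i)), ha.2⟩
      have hprod : φT (List.ofFn fun i => ((l i).map fun x => TensorAlgebra.ι ℂ x).prod).prod =
          φ (List.ofFn fun i => (l i).prod).prod := by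
        rcases n.eq_zero_or_pos with rfl | hn
        · simpa [hφT1] using (hφ [] (by simp) (by simp)).symm
        · rw [prod_ofFn_prod_map, hφT _ (flatten_ofFn_ne_nil l hn (hl _)), List.prod_flatten,
            List.map_ofFn]
          rfl
      simp only [F, sub_apply, LinearMap.compMultilinearMap_apply,
        MultilinearMap.mkPiAlgebraFin_apply, MultilinearMap.compLinearMap_apply,
        MultilinearMap.mkPiAlgebra_apply, hprod, hx', hbool n _ j halt, sub_self]
    simpa [F, sub_eq_zero] using hF
  · let F : MultilinearMap ℂ (fun _ : Fin n => TensorAlgebra ℂ A) ℂ :=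
      (brφ - φT).compMultilinearMap (MultilinearMap.mkPiAlgebraFin ℂ n (TensorAlgebra ℂ A))
    have hF : F a = 0 := by
      refine multilinearMap_eq_zero_of_mem_span F (fun i => wordSet (B (j i))) ?_ a
        fun i => hspan _ _ (ha.1 i)
      intro x hx
      choose l hl hlB hlx using hx
      obtain rfl : (fun i => ((l i).map fun x => TensorAlgebra.ι ℂ x).prod) = x := funext hlx
      have hne := flatten_ofFn_ne_nil l (by omega) (hl ⟨0, by omega⟩)
      simp only [F, LinearMap.compMultilinearMap_apply, MultilinearMap.mkPiAlgebraFin_apply,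
        LinearMap.sub_apply]
      rw [prod_ofFn_prod_map, hφT _ hne, hbrφ _ hne, sub_eq_zero]
      set w := (List.ofFn l).flatten with hw
      let L : List (Bool × A) := (List.ofFn fun i => (l i).map (Prod.mk (j i))).flatten
      have hLw : L.map Prod.snd = w := by
        simp [L, hw, List.map_flatten, List.map_ofFn, Function.comp_def]
      have hLlen : w.length = L.length := by rw [← hLw, List.length_map]
      have hLB : ∀ p ∈ L, p.2 ∈ B p.1 := by
        intro p hp
        simp only [L, List.mem_flatten, List.mem_ofFn] at hp
        obtain ⟨_, ⟨i, rfl⟩, hp⟩ := hp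
        obtain ⟨y, hy, rfl⟩ := List.mem_map.1 hp
        exact hlB i y hy
      have hlen : 0 < w.length := List.length_pos_iff.2 hne
      have hget : ∀ i : Fin w.length, w.get i = (L[i]).2 := by
        intro i
        simp [← hLw]
      obtain ⟨m, rfl⟩ : ∃ m, n = m + 1 := ⟨n - 1, by omega⟩
      have hhead : (L[0]).1 = j 0 := by
        have h : L.head?.map Prod.fst = some (j 0) := by
          obtain ⟨c, t, hct⟩ := List.exists_cons_of_ne_nil (hl 0)
          simp only [L, List.ofFn_succ, List.flatten_cons, hct, List.map_cons, List.cons_append,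
            List.head?_cons, Option.map_some]
        rw [List.head?_eq_getElem?, List.getElem?_eq_getElem (by omega)] at h
        simpa using h
      have hlast : (L[w.length - 1]).1 = j (Fin.last m) := by
        have h : L.getLast?.map Prod.fst = some (j (Fin.last m)) := by
          obtain ⟨t, c, hct⟩ := List.eq_nil_or_concat (l (Fin.last m)) |>.resolve_left (hl _)
          simp only [L, List.ofFn_succ', List.concat_eq_append, List.flatten_append,
            List.flatten_singleton, hct, List.map_append, List.map_singleton, ← List.append_assoc,
            List.getLast?_concat, Option.map_some]
        rw [List.getLast?_eq_getElem?, ← hLlen, List.getElem?_eq_getElem (by omega)] at h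
        simpa using h
      rw [mkValue_eq_map_prod_of_label_ne φ hφ hlen w.get (fun i => (L[i]).1)
        (fun i => by rw [hget]; exact hLB _ (List.getElem_mem _)), List.ofFn_get]
      simp only [Fin.getElem_fin]
      rw [hhead, hlast]
      exact hcyc
    simpa [F, sub_eq_zero] using hF

end NCProb
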